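/- (Finite-time convergence when θ < 1/2.) Assume Assumptions RS and QM, and let (y_t)_{t∈ℕ} be the mode estimate sequence obtained by the MS iteration starting from y₁ with f(y₁) > 0. Assume that for some τ ∈ ℕ, with S := closure of the convex hull of {y_t : t ≥ τ}: the KDE f is differentiable on S with Lipschitz-continuous gradient on S, and f has the Łojasiewicz property on S; and that y_t converges to ȳ and f satisfies the Łojasiewicz inequality at ȳ with some exponent θ ∈ [0, 1/2), i.e. there are ε > 0, c > 0 such that ‖∇f(y)‖ ≥ c·(f(ȳ) − f(y))^θ for all y ∈ S with ‖ȳ − y‖ < ε and f(ȳ) − f(y) ≥ 0. Then (y_t)_{t∈ℕ} converges in a finite number of iterations: there exists T ∈ ℕ such that y_t = ȳ for all t ≥ T. -/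

import Mathlib

open Set Filter Topology MeasureTheory
open scoped BigOperators RealInnerProductSpace

noncomputable section

/-- Euclidean space `ℝ^d`. -/
abbrev Euc (d : ℕ) := EuclideanSpace ℝ (Fin d)

/-- The convex subdifferential of a function `g` (viewed as a function on `[0,∞)`) at `u`. -/
def subdiffIci (g : ℝ → ℝ) (u : ℝ) : Set ℝ :=
  {c : ℝ | ∀ v ∈ Set.Ici (0:ℝ), g v - g u ≥ c * (v - u)}

/-- Assumption RS: the kernel `K` is bounded, continuous, non-negative, normalized, and
radially symmetric with profile `Khat`. -/
structure AssumptionRS (d : ℕ) (K : Euc d → ℝ) (Khat : ℝ → ℝ) : Prop where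
  bounded : ∃ M : ℝ, ∀ x, K x ≤ M
  cont : Continuous K
  nonneg : ∀ x, 0 ≤ K x
  normalized : ∫ x, K x = 1
  radial : ∀ x, K x = Khat (‖x‖ ^ 2 / 2)

/-- Assumption QM for the profile `Khat`, together with the selection `Kcheck`:
`Khat` is convex and non-increasing on `[0,∞)`, its right derivative at `0` exists as a real
number and equals `-(Kcheck 0)` (i.e. `Kcheck 0 = -Khat'(0+) > -∞`), and for every `u > 0`,
`-(Kcheck u)` belongs to the subdifferential of `Khat` at `u`. -/
structure AssumptionQM (Khat Kcheck : ℝ → ℝ) : Prop where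
  convexOn : ConvexOn ℝ (Set.Ici (0:ℝ)) Khat
  antitoneOn : AntitoneOn Khat (Set.Ici (0:ℝ))
  rderiv0 : Filter.Tendsto (fun v => (Khat v - Khat 0) / v)
      (nhdsWithin 0 (Set.Ioi 0)) (nhds (-(Kcheck 0)))
  subdiff : ∀ u : ℝ, 0 < u → -(Kcheck u) ∈ subdiffIci Khat u

/-- The kernel density estimate `f(y) = (1/(n hᵈ)) ∑ᵢ K((y - xᵢ)/h)`. -/
def KDE (d n : ℕ) (K : Euc d → ℝ) (x : Fin n → Euc d) (h : ℝ) (y : Euc d) : ℝ :=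
  (1 / ((n : ℝ) * h ^ d)) * ∑ i : Fin n, K (h⁻¹ • (y - x i))

/-- `f̌(y) = (1/(n hᵈ)) ∑ᵢ Ǩ(‖(y - xᵢ)/h‖²/2)`. -/
def fcheck (d n : ℕ) (Kcheck : ℝ → ℝ) (x : Fin n → Euc d) (h : ℝ) (y : Euc d) : ℝ :=
  (1 / ((n : ℝ) * h ^ d)) * ∑ i : Fin n, Kcheck (‖h⁻¹ • (y - x i)‖ ^ 2 / 2)

/-- The mean shift vector `m(y)`: zero if `f̌(y) = 0`, and otherwise
`m(y) = ∑ᵢ Ǩ(‖(y - xᵢ)/h‖²/2)(xᵢ - y) / ∑ᵢ Ǩ(‖(y - xᵢ)/h‖²/2)`. -/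
def msMap (d n : ℕ) (Kcheck : ℝ → ℝ) (x : Fin n → Euc d) (h : ℝ) (y : Euc d) : Euc d :=
  if fcheck d n Kcheck x h y = 0 then 0
  else (∑ i : Fin n, Kcheck (‖h⁻¹ • (y - x i)‖ ^ 2 / 2))⁻¹ •
    ∑ i : Fin n, Kcheck (‖h⁻¹ • (y - x i)‖ ^ 2 / 2) • (x i - y)

/-- `y` is a mean shift iteration sequence: `y (t+1) = y t + m (y t)` for all `t`. -/
def MSSeq (d n : ℕ) (Kcheck : ℝ → ℝ) (x : Fin n → Euc d) (h : ℝ) (y : ℕ → Euc d) : Prop :=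
  ∀ t : ℕ, y (t + 1) = y t + msMap d n Kcheck x h (y t)

/-- `f` has the Łojasiewicz property on the set `S`. -/
def LojasiewiczOn (d : ℕ) (f : Euc d → ℝ) (S : Set (Euc d)) : Prop :=
  ∃ ε > (0:ℝ), ∃ c > (0:ℝ), ∃ θ ∈ Set.Ico (0:ℝ) 1,
    ∀ x' ∈ S, ∀ x ∈ S, ‖x' - x‖ < ε → 0 ≤ f x' - f x →
      ‖gradient f x‖ ≥ c * (f x' - f x) ^ θ

/-- `f` satisfies the Łojasiewicz inequality at `ybar` with exponent `θ`, on the set `S`. -/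
def LojasiewiczAtWith (d : ℕ) (f : Euc d → ℝ) (S : Set (Euc d)) (ybar : Euc d) (θ : ℝ) : Prop :=
  ∃ ε > (0:ℝ), ∃ c > (0:ℝ),
    ∀ y ∈ S, ‖ybar - y‖ < ε → 0 ≤ f ybar - f y →
      ‖gradient f y‖ ≥ c * (f ybar - f y) ^ θ

/-!
Convexity of the profile gives the density estimate `f`, at each point `y`, a quadratic minorant
that touches it at `y` and is maximal at the mean shift update of `y`. If `a` is the curvature of
this minorant and `m` the mean shift vector, then `f` increases by at least `a ‖m‖² / 2` along the
update, and `∇f(y) = a m` wherever `f` is differentiable. Hence along the iteration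
`‖∇f(y_t)‖² ≤ 2 a_t (f(y_{t+1}) - f(y_t)) ≤ 2 A D_t`, where `D_t = f(ȳ) - f(y_t)` and `A` bounds
the curvatures. The Łojasiewicz inequality turns this into `c² D_t^{2θ} ≤ 2 A D_t`. As `2θ < 1` and
`D_t → 0`, this forces `D_t = 0` for all large `t`; no ascent is left, so the steps vanish.
-/

theorem eventually_mul_lt_mul_rpow (B : ℝ) {c p : ℝ} (hc : 0 < c) (hp : p < 1) :
    ∀ᶠ s in 𝓝[>] (0 : ℝ), B * s < c * s ^ p := by
  have hq : 0 < 1 - p := sub_pos.mpr hp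
  have hlim : Tendsto (fun s : ℝ ↦ B * s ^ (1 - p)) (𝓝[>] 0) (𝓝 0) := by
    have hcont : ContinuousAt (fun s : ℝ ↦ B * s ^ (1 - p)) 0 :=
      (Real.continuousAt_rpow_const 0 _ (.inr hq.le)).const_mul B
    simpa [Real.zero_rpow hq.ne'] using hcont.tendsto.mono_left nhdsWithin_le_nhds
  filter_upwards [hlim.eventually_lt_const hc, self_mem_nhdsWithin] with s hs (hpos : 0 < s)
  calc B * s = B * s ^ (1 - p) * s ^ p := by
        rw [mul_assoc, ← Real.rpow_add hpos, sub_add_cancel, Real.rpow_one]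
    _ < c * s ^ p := by gcongr

section QuadraticMinorant

variable {E : Type*} [NormedAddCommGroup E] [InnerProductSpace ℝ E]

/-- `f` lies above the concave quadratic with curvature `a` that touches it at `y` with slope `g`.
The sign of `a` is left free. -/
def HasQuadraticMinorantAt (f : E → ℝ) (g : E) (a : ℝ) (y : E) : Prop :=
  ∀ z, f y + ⟪g, z - y⟫ - a / 2 * ‖z - y‖ ^ 2 ≤ f z

namespace HasQuadraticMinorantAt

theorem sum {ι : Type*} {s : Finset ι} {f : ι → E → ℝ} {g : ι → E} {a : ι → ℝ} {y : E}
    (hf : ∀ i ∈ s, HasQuadraticMinorantAt (f i) (g i) (a i) y) :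
    HasQuadraticMinorantAt (fun z ↦ ∑ i ∈ s, f i z) (∑ i ∈ s, g i) (∑ i ∈ s, a i) y := by
  intro z
  simpa only [Finset.sum_sub_distrib, Finset.sum_add_distrib, sum_inner, Finset.sum_div,
    Finset.sum_mul] using Finset.sum_le_sum fun i hi ↦ hf i hi z

variable {f : E → ℝ} {g m y : E} {a : ℝ}

theorem const_mul (hf : HasQuadraticMinorantAt f g a y) {c : ℝ} (hc : 0 ≤ c) :
    HasQuadraticMinorantAt (fun z ↦ c * f z) (c • g) (c * a) y := by
  intro z
  rw [real_inner_smul_left]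
  linear_combination c * hf z

theorem mul_norm_sq_le_sub (hf : HasQuadraticMinorantAt f (a • m) a y) :
    a / 2 * ‖m‖ ^ 2 ≤ f (y + m) - f y := by
  have h := hf (y + m)
  rw [add_sub_cancel_left, real_inner_smul_left, real_inner_self_eq_norm_sq] at h
  linarith

theorem gradient_eq [CompleteSpace E] (hf : HasQuadraticMinorantAt f g a y)
    (hdiff : DifferentiableAt ℝ f y) : gradient f y = g := by
  have hmin : IsLocalMin (fun z ↦ f z - (innerSL ℝ g (z - y) - a / 2 * ‖z - y‖ ^ 2)) y :=
    .of_forall fun z ↦ by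
      have := hf z
      simp only [sub_self, map_zero, norm_zero, innerSL_apply_apply]
      linarith
  have hsub : HasFDerivAt (fun z ↦ z - y) (.id ℝ E) y := (hasFDerivAt_id y).sub_const y
  have hderiv := hdiff.hasGradientAt.hasFDerivAt.sub
    (((innerSL ℝ g).hasFDerivAt.comp y hsub).sub (hsub.norm_sq.const_mul (a / 2)))
  have hzero := hmin.hasFDerivAt_eq_zero hderiv
  refine ext_inner_right ℝ fun v ↦ sub_eq_zero.mp ?_
  simpa using DFunLike.congr_fun hzero v

end HasQuadraticMinorantAt

/-- `y` is a minorize–maximize sequence for `f` with curvatures `a`: each `y (t + 1)` maximizes a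
quadratic minorant of `f` at `y t`, whose slope is therefore `a t • (y (t + 1) - y t)`. If the
curvature is zero, the sequence stays where it is. -/
structure IsMinorizeMaximizeSeq (f : E → ℝ) (a : ℕ → ℝ) (y : ℕ → E) : Prop where
  nonneg : ∀ t, 0 ≤ a t
  minorant : ∀ t, HasQuadraticMinorantAt f (a t • (y (t + 1) - y t)) (a t) (y t)
  stationary : ∀ t, a t = 0 → y (t + 1) = y t

namespace IsMinorizeMaximizeSeq

variable {f : E → ℝ} {a : ℕ → ℝ} {y : ℕ → E} {ybar : E}

theorem mul_norm_sq_le_sub (hy : IsMinorizeMaximizeSeq f a y) (t : ℕ) :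
    a t / 2 * ‖y (t + 1) - y t‖ ^ 2 ≤ f (y (t + 1)) - f (y t) := by
  simpa using (hy.minorant t).mul_norm_sq_le_sub

theorem monotone (hy : IsMinorizeMaximizeSeq f a y) : Monotone fun t ↦ f (y t) :=
  monotone_nat_of_le_succ fun t ↦ sub_nonneg.mp <|
    (mul_nonneg (div_nonneg (hy.nonneg t) zero_le_two) (sq_nonneg _)).trans
      (hy.mul_norm_sq_le_sub t)

theorem le_of_tendsto (hy : IsMinorizeMaximizeSeq f a y) (hf : ContinuousAt f ybar)
    (hlim : Tendsto y atTop (𝓝 ybar)) (t : ℕ) : f (y t) ≤ f ybar :=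
  hy.monotone.ge_of_tendsto (hf.tendsto.comp hlim) t

theorem eq_of_apply_eq (hy : IsMinorizeMaximizeSeq f a y) {t : ℕ}
    (h : f (y (t + 1)) = f (y t)) : y (t + 1) = y t := by
  rcases (hy.nonneg t).eq_or_lt with hzero | hpos
  · exact hy.stationary t hzero.symm
  · have hstep : a t / 2 * ‖y (t + 1) - y t‖ ^ 2 ≤ 0 := by
      simpa only [h, sub_self] using hy.mul_norm_sq_le_sub t
    have hnorm : ‖y (t + 1) - y t‖ ^ 2 ≤ 0 := nonpos_of_mul_nonpos_right hstep (half_pos hpos)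
    simpa [sub_eq_zero] using hnorm.antisymm (sq_nonneg _)

theorem eventually_eq_of_eventually_apply_eq (hy : IsMinorizeMaximizeSeq f a y)
    (hlim : Tendsto y atTop (𝓝 ybar)) (h : ∀ᶠ t in atTop, f (y t) = f ybar) :
    ∀ᶠ t in atTop, y t = ybar := by
  obtain ⟨T, hT⟩ := eventually_atTop.mp h
  have hconst : EventuallyConst y atTop := eventuallyConst_atTop_nat.mpr
    ⟨T, fun t ht ↦ hy.eq_of_apply_eq ((hT (t + 1) (by lia)).trans (hT t ht).symm)⟩
  obtain ⟨z, hz⟩ := eventuallyConst_iff_exists_eventuallyEq.mp hconst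
  exact tendsto_nhds_unique hlim (tendsto_const_nhds.congr' hz.symm) ▸ hz

variable [CompleteSpace E]

theorem norm_gradient_sq_le (hy : IsMinorizeMaximizeSeq f a y) {t : ℕ}
    (hdiff : DifferentiableAt ℝ f (y t)) :
    ‖gradient f (y t)‖ ^ 2 ≤ 2 * a t * (f (y (t + 1)) - f (y t)) := by
  have hstep := mul_le_mul_of_nonneg_left (hy.mul_norm_sq_le_sub t)
    (mul_nonneg zero_le_two (hy.nonneg t))
  rw [(hy.minorant t).gradient_eq hdiff, norm_smul, mul_pow, Real.norm_eq_abs, sq_abs]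
  linarith

theorem eventually_eq_of_lojasiewicz (hy : IsMinorizeMaximizeSeq f a y) {A c θ : ℝ}
    (ha : ∀ t, a t ≤ A) (hf : ContinuousAt f ybar) (hlim : Tendsto y atTop (𝓝 ybar))
    (hdiff : ∀ᶠ t in atTop, DifferentiableAt ℝ f (y t)) (hc : 0 < c) (hθ : θ < 1 / 2)
    (hloja : ∀ᶠ t in atTop, c * (f ybar - f (y t)) ^ θ ≤ ‖gradient f (y t)‖) :
    ∀ᶠ t in atTop, y t = ybar := by
  refine hy.eventually_eq_of_eventually_apply_eq hlim ?_
  have hle := hy.le_of_tendsto hf hlim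
  have hgap : Tendsto (fun t ↦ f ybar - f (y t)) atTop (𝓝 0) := by
    simpa using (hf.tendsto.comp hlim).const_sub (f ybar)
  have hsmall := eventually_nhdsWithin_iff.mp <|
    eventually_mul_lt_mul_rpow (2 * A) (pow_pos hc 2) (show 2 * θ < 1 by linarith)
  filter_upwards [hgap.eventually hsmall, hdiff, hloja] with t hlt hd hl
  by_contra hne
  have hpos : 0 < f ybar - f (y t) := sub_pos.mpr ((hle t).lt_of_ne hne)
  refine (hlt hpos).not_ge ?_
  calc c ^ 2 * (f ybar - f (y t)) ^ (2 * θ)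
      = (c * (f ybar - f (y t)) ^ θ) ^ 2 := by
        rw [mul_pow, mul_comm 2 θ, Real.rpow_mul hpos.le, Real.rpow_two]
    _ ≤ ‖gradient f (y t)‖ ^ 2 := by gcongr
    _ ≤ 2 * a t * (f (y (t + 1)) - f (y t)) := hy.norm_gradient_sq_le hd
    _ ≤ 2 * A * (f ybar - f (y t)) := by
        have hA : 0 ≤ A := (hy.nonneg t).trans (ha t)
        gcongr
        · exact sub_nonneg.mpr (hy.monotone t.le_succ)
        · exact ha t
        · exact hle (t + 1)

end IsMinorizeMaximizeSeq

end QuadraticMinorant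

namespace AssumptionQM

variable {Khat Kcheck : ℝ → ℝ} {u v : ℝ}

theorem neg_mem_subdiffIci (hQM : AssumptionQM Khat Kcheck) (hu : 0 ≤ u) :
    -Kcheck u ∈ subdiffIci Khat u := by
  rcases hu.eq_or_lt with rfl | hu
  · rintro v (hv : 0 ≤ v)
    rcases hv.eq_or_lt with rfl | hv
    · simp
    · have hslope : -Kcheck 0 ≤ (Khat v - Khat 0) / v := by
        refine le_of_tendsto hQM.rderiv0 ?_
        filter_upwards [Ioo_mem_nhdsGT hv] with s hs
        simpa using hQM.convexOn.secant_mono (a := 0) self_mem_Ici hs.1.le hv.le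
          hs.1.ne' hv.ne' hs.2.le
      simpa using (le_div_iff₀ hv).mp hslope
  · exact hQM.subdiff u hu

theorem Kcheck_nonneg (hQM : AssumptionQM Khat Kcheck) (hu : 0 ≤ u) : 0 ≤ Kcheck u := by
  have hu' : 0 ≤ u + 1 := by linarith
  have hsub := hQM.neg_mem_subdiffIci hu (u + 1) hu'
  have hanti := hQM.antitoneOn hu hu' (by linarith)
  linarith

theorem Kcheck_antitoneOn (hQM : AssumptionQM Khat Kcheck) : AntitoneOn Kcheck (Ici 0) := by
  intro u hu v hv huv
  rcases huv.eq_or_lt with rfl | huv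
  · rfl
  · have huv_sub := hQM.neg_mem_subdiffIci hu v hv
    have hvu_sub := hQM.neg_mem_subdiffIci hv u hu
    have hmul : 0 ≤ (Kcheck u - Kcheck v) * (v - u) := by linarith
    exact sub_nonneg.mp (nonneg_of_mul_nonneg_left hmul (sub_pos.mpr huv))

theorem lipschitzOnWith (hQM : AssumptionQM Khat Kcheck) :
    LipschitzOnWith (Kcheck 0).toNNReal Khat (Ici 0) := by
  refine .of_le_add_mul _ fun u hu v hv ↦ ?_
  have hsub := hQM.neg_mem_subdiffIci hu v hv
  rw [Real.coe_toNNReal _ (hQM.Kcheck_nonneg le_rfl), Real.dist_eq, abs_sub_comm]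
  calc Khat u ≤ Khat v + Kcheck u * (v - u) := by linarith
    _ ≤ Khat v + Kcheck u * |v - u| := by
        gcongr
        · exact hQM.Kcheck_nonneg hu
        · exact le_abs_self _
    _ ≤ Khat v + Kcheck 0 * |v - u| := by
        gcongr
        exact hQM.Kcheck_antitoneOn self_mem_Ici hu hu

theorem hasQuadraticMinorantAt_radial {E : Type*} [NormedAddCommGroup E] [InnerProductSpace ℝ E]
    (hQM : AssumptionQM Khat Kcheck) (r : ℝ) (x y : E) :
    HasQuadraticMinorantAt (fun z ↦ Khat (‖r • (z - x)‖ ^ 2 / 2))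
      ((r ^ 2 * Kcheck (‖r • (y - x)‖ ^ 2 / 2)) • (x - y))
      (r ^ 2 * Kcheck (‖r • (y - x)‖ ^ 2 / 2)) y := by
  intro z
  have hsub := hQM.neg_mem_subdiffIci (u := ‖r • (y - x)‖ ^ 2 / 2) (by positivity)
    (‖r • (z - x)‖ ^ 2 / 2) (mem_Ici.mpr (by positivity))
  have hnorm (w : E) : ‖r • w‖ ^ 2 = r ^ 2 * ‖w‖ ^ 2 := by
    rw [norm_smul, mul_pow, Real.norm_eq_abs, sq_abs]
  have hexpand : ‖z - x‖ ^ 2 = ‖z - y‖ ^ 2 - 2 * ⟪x - y, z - y⟫ + ‖y - x‖ ^ 2 := by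
    rw [← sub_sub_sub_cancel_right z x y, norm_sub_sq_real, real_inner_comm, norm_sub_rev x y]
  have hincrement : ‖r • (z - x)‖ ^ 2 / 2 - ‖r • (y - x)‖ ^ 2 / 2
      = r ^ 2 * (‖z - y‖ ^ 2 / 2 - ⟪x - y, z - y⟫) := by
    rw [hnorm, hnorm, hexpand]
    ring
  rw [hincrement] at hsub
  rw [real_inner_smul_left]
  linarith

end AssumptionQM

section MeanShift

variable {d n : ℕ} {K : Euc d → ℝ} {Khat Kcheck : ℝ → ℝ} {x : Fin n → Euc d} {h : ℝ}

theorem continuous_KDE (hK : ∀ z, K z = Khat (‖z‖ ^ 2 / 2)) (hQM : AssumptionQM Khat Kcheck) :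
    Continuous (KDE d n K x h) := by
  have hKcont : Continuous K := by
    rw [funext hK]
    exact hQM.lipschitzOnWith.continuousOn.comp_continuous (by fun_prop)
      fun z ↦ mem_Ici.mpr (by positivity)
  unfold KDE
  fun_prop

theorem fcheck_nonneg (hQM : AssumptionQM Khat Kcheck) (hh : 0 ≤ h) (y : Euc d) :
    0 ≤ fcheck d n Kcheck x h y :=
  mul_nonneg (by positivity) (Finset.sum_nonneg fun _ _ ↦ hQM.Kcheck_nonneg (by positivity))

theorem fcheck_le (hQM : AssumptionQM Khat Kcheck) (hn : 0 < n) (hh : 0 ≤ h) (y : Euc d) :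
    fcheck d n Kcheck x h y ≤ Kcheck 0 / h ^ d := by
  have hle (i : Fin n) : Kcheck (‖h⁻¹ • (y - x i)‖ ^ 2 / 2) ≤ Kcheck 0 :=
    hQM.Kcheck_antitoneOn self_mem_Ici (mem_Ici.mpr (by positivity)) (by positivity)
  calc fcheck d n Kcheck x h y ≤ 1 / (n * h ^ d) * (n * Kcheck 0) := by
        refine mul_le_mul_of_nonneg_left ?_ (by positivity)
        simpa using Finset.sum_le_card_nsmul Finset.univ _ _ fun i _ ↦ hle i
    _ = Kcheck 0 / h ^ d := by
        rw [one_div_mul_eq_div, mul_div_mul_left _ _ (by positivity)]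

theorem fcheck_smul_msMap (hQM : AssumptionQM Khat Kcheck) (hn : 0 < n) (hh : 0 < h)
    (y : Euc d) :
    fcheck d n Kcheck x h y • msMap d n Kcheck x h y
      = (1 / (n * h ^ d)) • ∑ i, Kcheck (‖h⁻¹ • (y - x i)‖ ^ 2 / 2) • (x i - y) := by
  have hC : 1 / (n * h ^ d) ≠ 0 := by positivity
  by_cases hzero : fcheck d n Kcheck x h y = 0
  · have hsum := (mul_eq_zero.mp hzero).resolve_left hC
    have hweight := (Finset.sum_eq_zero_iff_of_nonneg
      fun i _ ↦ hQM.Kcheck_nonneg (by positivity)).mp hsum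
    rw [hzero, zero_smul, Finset.sum_eq_zero fun i hi ↦ by rw [hweight i hi, zero_smul], smul_zero]
  · rw [msMap, if_neg hzero]
    have hsum := right_ne_zero_of_mul hzero
    rw [fcheck, mul_smul, smul_inv_smul₀ hsum]

theorem KDE_hasQuadraticMinorantAt (hK : ∀ z, K z = Khat (‖z‖ ^ 2 / 2))
    (hQM : AssumptionQM Khat Kcheck) (hn : 0 < n) (hh : 0 < h) (y : Euc d) :
    HasQuadraticMinorantAt (KDE d n K x h)
      ((h⁻¹ ^ 2 * fcheck d n Kcheck x h y) • msMap d n Kcheck x h y)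
      (h⁻¹ ^ 2 * fcheck d n Kcheck x h y) y := by
  obtain rfl : K = fun z ↦ Khat (‖z‖ ^ 2 / 2) := funext hK
  have hsum := (HasQuadraticMinorantAt.sum (s := Finset.univ) fun i _ ↦
    hQM.hasQuadraticMinorantAt_radial h⁻¹ (x i) y).const_mul
      (c := 1 / (n * h ^ d)) (by positivity)
  have hslope : (h⁻¹ ^ 2 * fcheck d n Kcheck x h y) • msMap d n Kcheck x h y
      = (1 / (n * h ^ d)) •
        ∑ i, (h⁻¹ ^ 2 * Kcheck (‖h⁻¹ • (y - x i)‖ ^ 2 / 2)) • (x i - y) := by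
    simp only [mul_smul, fcheck_smul_msMap hQM hn hh, smul_comm (h⁻¹ ^ 2) (1 / (n * h ^ d)),
      Finset.smul_sum]
  have hcurvature : h⁻¹ ^ 2 * fcheck d n Kcheck x h y
      = 1 / (n * h ^ d) * ∑ i, h⁻¹ ^ 2 * Kcheck (‖h⁻¹ • (y - x i)‖ ^ 2 / 2) := by
    rw [fcheck, ← Finset.mul_sum, mul_left_comm]
  rw [hslope, hcurvature]
  exact hsum

theorem MSSeq.isMinorizeMaximizeSeq {y : ℕ → Euc d} (hy : MSSeq d n Kcheck x h y)
    (hK : ∀ z, K z = Khat (‖z‖ ^ 2 / 2)) (hQM : AssumptionQM Khat Kcheck)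
    (hn : 0 < n) (hh : 0 < h) :
    IsMinorizeMaximizeSeq (KDE d n K x h) (fun t ↦ h⁻¹ ^ 2 * fcheck d n Kcheck x h (y t)) y where
  nonneg t := mul_nonneg (by positivity) (fcheck_nonneg hQM hh.le _)
  minorant t := by
    rw [hy t, add_sub_cancel_left]
    exact KDE_hasQuadraticMinorantAt hK hQM hn hh (y t)
  stationary t hzero := by
    have hf : fcheck d n Kcheck x h (y t) = 0 := by simpa [hh.ne'] using hzero
    rw [hy t, msMap, if_pos hf, add_zero]

end MeanShift

theorem ms_finite_time_convergence_general {d n : ℕ} (hn : 0 < n) {K : Euc d → ℝ}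
    {Khat Kcheck : ℝ → ℝ} (hK : ∀ z, K z = Khat (‖z‖ ^ 2 / 2)) (hQM : AssumptionQM Khat Kcheck)
    {x : Fin n → Euc d} {h : ℝ} (hh : 0 < h) {y : ℕ → Euc d} (hy : MSSeq d n Kcheck x h y)
    {S : Set (Euc d)} (hyS : ∀ᶠ t in atTop, y t ∈ S)
    (hdiff : ∀ z ∈ S, DifferentiableAt ℝ (KDE d n K x h) z)
    {ybar : Euc d} (hlim : Tendsto y atTop (𝓝 ybar)) {θ : ℝ} (hθ : θ < 1 / 2)
    (hloja : LojasiewiczAtWith d (KDE d n K x h) S ybar θ) :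
    ∃ T : ℕ, ∀ t : ℕ, T ≤ t → y t = ybar := by
  obtain ⟨ε, hε, c, hc, hineq⟩ := hloja
  have hmm := hy.isMinorizeMaximizeSeq hK hQM hn hh
  have hf : ContinuousAt (KDE d n K x h) ybar := (continuous_KDE hK hQM).continuousAt
  have hbound (t : ℕ) : h⁻¹ ^ 2 * fcheck d n Kcheck x h (y t)
      ≤ h⁻¹ ^ 2 * (Kcheck 0 / h ^ d) :=
    mul_le_mul_of_nonneg_left (fcheck_le hQM hn hh.le _) (by positivity)
  refine eventually_atTop.mp <| hmm.eventually_eq_of_lojasiewicz hbound hf hlim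
    (hyS.mono fun t ↦ hdiff (y t)) hc hθ ?_
  filter_upwards [hyS, hlim.eventually (Metric.ball_mem_nhds ybar hε)] with t htS hball
  exact hineq (y t) htS (mem_ball_iff_norm'.mp hball)
    (sub_nonneg.mpr (hmm.le_of_tendsto hf hlim t))

/-- Finite-time convergence when `θ < 1/2`: under the assumptions of the
convergence theorem, if moreover `y t → ȳ` and `f` satisfies the Łojasiewicz inequality at `ȳ`
with some exponent `θ ∈ [0, 1/2)`, then the sequence converges in a finite number of
iterations. -/
theorem ms_finite_time_convergence
    (d n : ℕ) (hd : 0 < d) (hn : 0 < n)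
    (K : Euc d → ℝ) (Khat Kcheck : ℝ → ℝ)
    (hRS : AssumptionRS d K Khat) (hQM : AssumptionQM Khat Kcheck)
    (x : Fin n → Euc d) (h : ℝ) (hh : 0 < h)
    (y : ℕ → Euc d) (hy : MSSeq d n Kcheck x h y)
    (hy0 : 0 < KDE d n K x h (y 0))
    (τ : ℕ) (S : Set (Euc d))
    (hS : S = closure (convexHull ℝ {z : Euc d | ∃ t : ℕ, τ ≤ t ∧ z = y t}))
    (ha1diff : ∀ z ∈ S, DifferentiableAt ℝ (KDE d n K x h) z)
    (ha1lip : ∃ L : NNReal, LipschitzOnWith L (gradient (KDE d n K x h)) S)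
    (ha2 : LojasiewiczOn d (KDE d n K x h) S)
    (ybar : Euc d) (hconv : Filter.Tendsto y Filter.atTop (nhds ybar))
    (θ : ℝ) (hθ : θ ∈ Set.Ico (0:ℝ) (1/2))
    (hloja : LojasiewiczAtWith d (KDE d n K x h) S ybar θ) :
    ∃ T : ℕ, ∀ t : ℕ, T ≤ t → y t = ybar := by
  subst hS
  have hyS := (eventually_ge_atTop τ).mono fun t ht ↦
    subset_closure (subset_convexHull ℝ {z | ∃ t, τ ≤ t ∧ z = y t} ⟨t, ht, rfl⟩)
  exact ms_finite_time_convergence_general hn hRS.radial hQM hh hy hyS ha1diff hconv hθ.2 hloja
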